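/- Let a > 0 and let f : [0,∞) → (0,∞), and for ξ > 1 define τ(ξ) = −log f(ξ)/log ξ. Suppose that liminf_{k→∞, k ∈ ℕ} τ(ak) > 0 and that τ is uniformly continuous on (1,∞). Then there is no Borel probability measure μ on ℝ with μ(ℝ \ 𝕃) = 0 for which there exist C > 0, M > 0 with |μ̂(ξ)| ≤ C·f(|ξ|) for all |ξ| ≥ M. -/

import Mathlib

open MeasureTheory Filter Set

/-- The Fourier transform of a measure on `ℝ`: `μ̂(ξ) = ∫ e^(−2πiξx) dμ(x)`. -/
noncomputable def fourierT (μ : Measure ℝ) (ξ : ℝ) : ℂ :=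
  ∫ x, Complex.exp (((-2 * Real.pi * ξ * x : ℝ) : ℂ) * Complex.I) ∂μ

/-!
Polynomial decay of `μ̂` along a single arithmetic progression already prevents `μ` from charging
Liouville numbers. If `μ̂(ak) = O(k ^ (-s))`, where one may take `0 < s < 1`, then integrating a
Fejér kernel against `μ` and using Markov's inequality gives `μ(B(x, r)) ≲ r ^ s` uniformly in `x`,
with the order of the kernel comparable to `1 / r`. For `p s > 2` the `n ^ (-p)`-neighbourhoods of
the `O(n)` fractions with denominator `n` in a bounded set then have total measure
`O(n ^ (1 - p s))`, which is summable, so by Borel–Cantelli almost every point is approximable to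
order `p` with only finitely many denominators. Positivity of `liminf τ(ak)` is what makes `f(ak)`
decay polynomially.
-/

section TrigSum

/-- The exponential sum `1 + e^(iθ) + ⋯ + e^(i(N-1)θ)`, a one-sided Dirichlet kernel. It is left
unnormalized, so that `‖trigSum N θ‖ ^ 2 / N` is the Fejér kernel. -/
noncomputable def trigSum (N : ℕ) (θ : ℝ) : ℂ :=
  ∑ j ∈ Finset.range N, Complex.exp ((j * θ : ℝ) * Complex.I)

@[fun_prop]
lemma continuous_trigSum (N : ℕ) : Continuous (trigSum N) := by
  unfold trigSum
  fun_prop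

lemma norm_trigSum_le (N : ℕ) (θ : ℝ) : ‖trigSum N θ‖ ≤ N :=
  (norm_sum_le_of_le _ fun _ _ ↦ (Complex.norm_exp_ofReal_mul_I _).le).trans_eq (by simp)

lemma ofReal_norm_trigSum_sq (N : ℕ) (θ : ℝ) :
    ((‖trigSum N θ‖ ^ 2 : ℝ) : ℂ) = ∑ j ∈ Finset.range N, ∑ l ∈ Finset.range N,
      Complex.exp ((((j : ℝ) - l) * θ : ℝ) * Complex.I) := by
  rw [Complex.ofReal_pow, ← Complex.mul_conj', trigSum, map_sum, Finset.sum_mul_sum]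
  refine Finset.sum_congr rfl fun j _ ↦ Finset.sum_congr rfl fun l _ ↦ ?_
  rw [← Complex.exp_conj, ← Complex.exp_add, map_mul, Complex.conj_ofReal, Complex.conj_I]
  push_cast
  ring_nf

lemma half_le_norm_trigSum {N : ℕ} {θ : ℝ} (h : N * |θ| ≤ Real.pi / 3) :
    (N : ℝ) / 2 ≤ ‖trigSum N θ‖ := by
  have half_le_cos : ∀ j ∈ Finset.range N, 1 / 2 ≤ Real.cos (j * θ) := fun j hj ↦ by
    have hjN : |j * θ| ≤ Real.pi / 3 := by
      rw [abs_mul, Nat.abs_cast]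
      exact (by gcongr; exact (Finset.mem_range.1 hj).le : (j : ℝ) * |θ| ≤ N * |θ|).trans h
    rw [← Real.cos_abs, ← Real.cos_pi_div_three]
    exact Real.cos_le_cos_of_nonneg_of_le_pi (abs_nonneg _) (by linarith [Real.pi_pos]) hjN
  calc (N : ℝ) / 2 = ∑ j ∈ Finset.range N, (1 / 2 : ℝ) := by simp [div_eq_mul_inv]
    _ ≤ ∑ j ∈ Finset.range N, Real.cos (j * θ) := Finset.sum_le_sum half_le_cos
    _ = (trigSum N θ).re := by simp only [trigSum, Complex.re_sum, Complex.exp_ofReal_mul_I_re]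
    _ ≤ ‖trigSum N θ‖ := Complex.re_le_norm _

end TrigSum

lemma sum_range_natAbs_sub_le {g : ℕ → ℝ} (hg : ∀ k, 0 ≤ g k) {j N : ℕ} (hj : j < N) :
    ∑ l ∈ Finset.range N, g ((j : ℤ) - l).natAbs ≤ 2 * ∑ k ∈ Finset.range N, g k := by
  obtain ⟨m, rfl⟩ : ∃ m, N = j + 1 + m := Nat.exists_eq_add_of_lt hj |>.imp (by omega)
  have left : ∑ l ∈ Finset.range (j + 1), g ((j : ℤ) - l).natAbs =
      ∑ k ∈ Finset.range (j + 1), g k := by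
    rw [← Finset.sum_range_reflect]
    refine Finset.sum_congr rfl fun l hl ↦ congrArg g ?_
    rw [Finset.mem_range] at hl
    omega
  have right : ∑ i ∈ Finset.range m, g ((j : ℤ) - ↑(j + 1 + i)).natAbs =
      ∑ i ∈ Finset.range m, g (i + 1) :=
    Finset.sum_congr rfl fun i _ ↦ congrArg g (by omega)
  have sum_mono {n : ℕ} (hn : n ≤ j + 1 + m) :
      ∑ k ∈ Finset.range n, g k ≤ ∑ k ∈ Finset.range (j + 1 + m), g k :=
    Finset.sum_le_sum_of_subset_of_nonneg (Finset.range_mono hn) fun k _ _ ↦ hg k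
  have := Finset.sum_range_succ' g m
  rw [Finset.sum_range_add, left, right]
  linarith [sum_mono (by omega : j + 1 ≤ _), sum_mono (by omega : m + 1 ≤ _), hg 0]

section CharFun

variable {μ : Measure ℝ}

lemma integrable_exp_ofReal_mul_I [IsFiniteMeasure μ] {g : ℝ → ℝ} (hg : Continuous g) :
    Integrable (fun y ↦ Complex.exp (g y * Complex.I)) μ :=
  .of_bound (by fun_prop) 1 (.of_forall fun y ↦ (Complex.norm_exp_ofReal_mul_I _).le)

lemma norm_charFun_neg (t : ℝ) : ‖charFun μ (-t)‖ = ‖charFun μ t‖ := by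
  rw [charFun_neg, RCLike.norm_conj]

lemma norm_integral_exp_sub (s x : ℝ) :
    ‖∫ y, Complex.exp ((s * (y - x) : ℝ) * Complex.I) ∂μ‖ = ‖charFun μ s‖ := by
  have factor (y : ℝ) : Complex.exp ((s * (y - x) : ℝ) * Complex.I) =
      Complex.exp ((-(s * x) : ℝ) * Complex.I) * Complex.exp (s * y * Complex.I) := by
    rw [← Complex.exp_add]
    push_cast
    ring_nf
  simp_rw [factor, integral_const_mul, norm_mul, Complex.norm_exp_ofReal_mul_I, one_mul,
    charFun_apply_real]

lemma integral_norm_trigSum_sq_le [IsFiniteMeasure μ] (N : ℕ) (t x : ℝ) :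
    ∫ y, ‖trigSum N (t * (y - x))‖ ^ 2 ∂μ ≤
      ∑ j ∈ Finset.range N, ∑ l ∈ Finset.range N, ‖charFun μ (((j : ℝ) - l) * t)‖ := by
  have expand : ((∫ y, ‖trigSum N (t * (y - x))‖ ^ 2 ∂μ : ℝ) : ℂ) =
      ∑ j ∈ Finset.range N, ∑ l ∈ Finset.range N,
        ∫ y, Complex.exp ((((j : ℝ) - l) * t * (y - x) : ℝ) * Complex.I) ∂μ := by
    simp_rw [← integral_complex_ofReal, ofReal_norm_trigSum_sq, ← mul_assoc]
    have integrable (j l : ℕ) := integrable_exp_ofReal_mul_I (μ := μ)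
      (g := fun y ↦ ((j : ℝ) - l) * t * (y - x)) (by fun_prop)
    rw [integral_finsetSum _ fun j _ ↦ integrable_finsetSum _ fun l _ ↦ integrable j l]
    exact Finset.sum_congr rfl fun j _ ↦ integral_finsetSum _ fun l _ ↦ integrable j l
  calc ∫ y, ‖trigSum N (t * (y - x))‖ ^ 2 ∂μ
      ≤ ‖((∫ y, ‖trigSum N (t * (y - x))‖ ^ 2 ∂μ : ℝ) : ℂ)‖ := by
        rw [Complex.norm_real]
        exact Real.le_norm_self _
    _ ≤ _ := by
        rw [expand]
        refine norm_sum_le_of_le _ fun j _ ↦ norm_sum_le_of_le _ fun l _ ↦ ?_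
        exact (norm_integral_exp_sub _ _).le

lemma sum_sum_norm_charFun_le (N : ℕ) (t : ℝ) :
    ∑ j ∈ Finset.range N, ∑ l ∈ Finset.range N, ‖charFun μ (((j : ℝ) - l) * t)‖ ≤
      2 * N * ∑ k ∈ Finset.range N, ‖charFun μ (k * t)‖ := by
  have norm_eq (j l : ℕ) : ‖charFun μ (((j : ℝ) - l) * t)‖ =
      ‖charFun μ ((((j : ℤ) - l).natAbs : ℝ) * t)‖ := by
    have cast_sub : (j : ℝ) - l = ((j - l : ℤ) : ℝ) := by push_cast; rfl
    rw [cast_sub, Nat.cast_natAbs, Int.cast_abs]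
    rcases abs_choice ((j - l : ℤ) : ℝ) with h | h <;> rw [h]
    rw [neg_mul, norm_charFun_neg]
  simp_rw [norm_eq]
  refine (Finset.sum_le_card_nsmul _ _ _ fun j hj ↦
    sum_range_natAbs_sub_le (g := fun k ↦ ‖charFun μ (k * t)‖) (fun _ ↦ norm_nonneg _)
      (Finset.mem_range.1 hj)).trans_eq ?_
  rw [Finset.card_range, nsmul_eq_mul]
  ring

theorem measureReal_closedBall_le_sum_norm_charFun [IsFiniteMeasure μ] {N : ℕ} {t r : ℝ}
    (hN : N ≠ 0) (hr : N * (|t| * r) ≤ Real.pi / 3) (x : ℝ) :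
    μ.real (Metric.closedBall x r) ≤ 8 / N * ∑ k ∈ Finset.range N, ‖charFun μ (k * t)‖ := by
  have closedBall_subset : Metric.closedBall x r ⊆
      {y | (N : ℝ) ^ 2 / 4 ≤ ‖trigSum N (t * (y - x))‖ ^ 2} := fun y hy ↦ by
    have hy' : N * |t * (y - x)| ≤ Real.pi / 3 := by
      rw [Metric.mem_closedBall, Real.dist_eq] at hy
      rw [abs_mul]
      exact hr.trans' (by gcongr)
    calc (N : ℝ) ^ 2 / 4 = (N / 2) ^ 2 := by ring
      _ ≤ ‖trigSum N (t * (y - x))‖ ^ 2 := by gcongr; exact half_le_norm_trigSum hy'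
  have integrable : Integrable (fun y ↦ ‖trigSum N (t * (y - x))‖ ^ 2) μ := by
    refine .of_bound (by fun_prop) ((N : ℝ) ^ 2) (.of_forall fun y ↦ ?_)
    rw [norm_pow, norm_norm]
    gcongr
    exact norm_trigSum_le _ _
  have key : (N : ℝ) ^ 2 / 4 * μ.real (Metric.closedBall x r) ≤
      2 * N * ∑ k ∈ Finset.range N, ‖charFun μ (k * t)‖ := calc
    _ ≤ (N : ℝ) ^ 2 / 4 * μ.real {y | (N : ℝ) ^ 2 / 4 ≤ ‖trigSum N (t * (y - x))‖ ^ 2} := by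
        gcongr
        exact measure_ne_top _ _
    _ ≤ ∫ y, ‖trigSum N (t * (y - x))‖ ^ 2 ∂μ :=
        mul_meas_ge_le_integral_of_nonneg (.of_forall fun _ ↦ by positivity) integrable _
    _ ≤ _ := (integral_norm_trigSum_sq_le N t x).trans (sum_sum_norm_charFun_le N t)
  have constants : (2 * N : ℝ) = N ^ 2 / 4 * (8 / N) := by
    field_simp
    norm_num
  rw [constants, mul_assoc] at key
  exact le_of_mul_le_mul_left key (by positivity)

end CharFun

section PowerSums

open Asymptotics

lemma one_sub_mul_rpow_neg_le {s x : ℝ} (hs₀ : 0 ≤ s) (hs₁ : s ≤ 1) (hx : 1 ≤ x) :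
    (1 - s) * x ^ (-s) ≤ x ^ (1 - s) - (x - 1) ^ (1 - s) := by
  have hx₀ : 0 < x := by linarith
  have rpow_split : x ^ (1 - s) = x * x ^ (-s) := by
    rw [sub_eq_add_neg, Real.rpow_add hx₀, Real.rpow_one]
  have bernoulli : (1 + -x⁻¹) ^ (1 - s) ≤ 1 + (1 - s) * -x⁻¹ :=
    rpow_one_add_le_one_add_mul_self (neg_le_neg (inv_le_one_of_one_le₀ hx))
      (by linarith) (by linarith)
  have : (x - 1) ^ (1 - s) ≤ x ^ (1 - s) - (1 - s) * x ^ (-s) := calc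
    (x - 1) ^ (1 - s) = (x * (1 + -x⁻¹)) ^ (1 - s) := by
      congr 1
      field_simp
      ring
    _ = x ^ (1 - s) * (1 + -x⁻¹) ^ (1 - s) :=
      Real.mul_rpow hx₀.le (by linarith [inv_le_one_of_one_le₀ hx])
    _ ≤ x ^ (1 - s) * (1 + (1 - s) * -x⁻¹) := by gcongr
    _ = x ^ (1 - s) - (1 - s) * x ^ (-s) := by
      rw [rpow_split]
      field_simp
      ring
  linarith

lemma one_sub_mul_sum_range_rpow_neg_le {s : ℝ} (hs₀ : 0 ≤ s) (hs₁ : s < 1) (N : ℕ) :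
    (1 - s) * ∑ k ∈ Finset.range N, ((k + 1 : ℕ) : ℝ) ^ (-s) ≤ (N : ℝ) ^ (1 - s) := by
  calc (1 - s) * ∑ k ∈ Finset.range N, ((k + 1 : ℕ) : ℝ) ^ (-s)
      ≤ ∑ k ∈ Finset.range N, (((k + 1 : ℕ) : ℝ) ^ (1 - s) - (k : ℝ) ^ (1 - s)) := by
        rw [Finset.mul_sum]
        refine Finset.sum_le_sum fun k _ ↦ ?_
        simpa using one_sub_mul_rpow_neg_le hs₀ hs₁.le (x := (k + 1 : ℕ)) (by simp)
    _ = (N : ℝ) ^ (1 - s) := by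
        rw [Finset.sum_range_sub (fun k : ℕ ↦ (k : ℝ) ^ (1 - s)), Nat.cast_zero,
          Real.zero_rpow (by linarith), sub_zero]

lemma exists_sum_range_norm_le_of_isBigO_rpow_neg {E : Type*} [SeminormedAddCommGroup E]
    {u : ℕ → E} {s : ℝ} (hs₀ : 0 ≤ s) (hs₁ : s < 1)
    (hu : u =O[atTop] fun k ↦ (k : ℝ) ^ (-s)) :
    ∃ C > 0, ∀ N : ℕ, ∑ k ∈ Finset.range N, ‖u k‖ ≤ C * (N : ℝ) ^ (1 - s) := by
  obtain ⟨C, hC, hu⟩ := bound_of_isBigO_nat_atTop hu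
  have norm_succ_le (k : ℕ) : ‖u (k + 1)‖ ≤ C * ((k + 1 : ℕ) : ℝ) ^ (-s) := by
    have hpos : 0 < ((k + 1 : ℕ) : ℝ) ^ (-s) := by positivity
    simpa only [Real.norm_of_nonneg hpos.le] using hu hpos.ne'
  have hs : 0 < 1 - s := by linarith
  refine ⟨‖u 0‖ + C / (1 - s), by positivity, fun N ↦ ?_⟩
  rcases N with _ | N
  · simp only [Finset.range_zero, Finset.sum_empty]
    positivity
  have one_le : 1 ≤ ((N + 1 : ℕ) : ℝ) ^ (1 - s) := Real.one_le_rpow (by simp) hs.le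
  calc ∑ k ∈ Finset.range (N + 1), ‖u k‖
      = ‖u 0‖ + ∑ k ∈ Finset.range N, ‖u (k + 1)‖ := by rw [Finset.sum_range_succ', add_comm]
    _ ≤ ‖u 0‖ + C / (1 - s) * ((1 - s) * ∑ k ∈ Finset.range N, ((k + 1 : ℕ) : ℝ) ^ (-s)) := by
        rw [← mul_assoc, div_mul_cancel₀ _ hs.ne', Finset.mul_sum]
        gcongr
        exact norm_succ_le _
    _ ≤ ‖u 0‖ * ((N + 1 : ℕ) : ℝ) ^ (1 - s) + C / (1 - s) * ((N + 1 : ℕ) : ℝ) ^ (1 - s) := by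
        gcongr
        · exact le_mul_of_one_le_right (norm_nonneg _) one_le
        · refine (one_sub_mul_sum_range_rpow_neg_le hs₀ hs₁ N).trans ?_
          gcongr
          exact N.le_succ
    _ = _ := (add_mul _ _ _).symm

end PowerSums

section Frostman

open Asymptotics Metric

/-- The Frostman condition with exponent `s`: balls of radius `r` have measure `O(r ^ s)`, uniformly
in the center. It is the regularity that Fourier decay provides and that, for `s > 0`, rules out
charging the Liouville numbers. There is no upper bound on `r`; for `0 ≤ s` and finite `μ` this
amounts to requiring the estimate for small `r` only, with a different constant. -/
def IsFrostman {X : Type*} [PseudoMetricSpace X] [MeasurableSpace X] (μ : Measure X) (s : ℝ) :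
    Prop :=
  ∃ C ≥ 0, ∀ x : X, ∀ r : ℝ, 0 < r → μ (closedBall x r) ≤ ENNReal.ofReal (C * r ^ s)

lemma IsFrostman.of_forall_le {X : Type*} [PseudoMetricSpace X] [MeasurableSpace X]
    {μ : Measure X} [IsFiniteMeasure μ] {s C ρ : ℝ} (hs : 0 ≤ s) (hρ : 0 < ρ)
    (h : ∀ x : X, ∀ r : ℝ, 0 < r → r ≤ ρ → μ.real (closedBall x r) ≤ C * r ^ s) :
    IsFrostman μ s := by
  refine ⟨max C (μ.real univ / ρ ^ s), le_max_of_le_right (by positivity), fun x r hr ↦ ?_⟩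
  rw [← ofReal_measureReal]
  refine ENNReal.ofReal_le_ofReal ?_
  rcases le_total r ρ with hrρ | hρr
  · exact (h x r hr hrρ).trans (by gcongr; exact le_max_left _ _)
  · calc μ.real (closedBall x r) ≤ μ.real univ := measureReal_mono (subset_univ _)
      _ = μ.real univ / ρ ^ s * ρ ^ s := (div_mul_cancel₀ _ (by positivity)).symm
      _ ≤ max C (μ.real univ / ρ ^ s) * r ^ s := by
        gcongr
        exact le_max_right _ _

theorem isFrostman_of_charFun_isBigO {μ : Measure ℝ} [IsFiniteMeasure μ] {t s : ℝ} (ht : t ≠ 0)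
    (hs₀ : 0 ≤ s) (hs₁ : s < 1)
    (h : (fun k : ℕ ↦ charFun μ (k * t)) =O[atTop] fun k ↦ (k : ℝ) ^ (-s)) :
    IsFrostman μ s := by
  obtain ⟨C, hC, hsum⟩ := exists_sum_range_norm_le_of_isBigO_rpow_neg hs₀ hs₁ h
  set ρ := Real.pi / (3 * |t|) with hρ_def
  have hρ : 0 < ρ := by positivity
  refine .of_forall_le (C := 8 * C * (ρ / 2) ^ (-s)) hs₀ hρ fun x r hr hrρ ↦ ?_
  set N := ⌊ρ / r⌋₊
  have hN : 1 ≤ N := Nat.one_le_floor_iff _ |>.2 ((one_le_div hr).2 hrρ)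
  have hN_le : N * (|t| * r) ≤ Real.pi / 3 := calc
    N * (|t| * r) ≤ ρ / r * (|t| * r) := by gcongr; exact Nat.floor_le (by positivity)
    _ = Real.pi / 3 := by rw [hρ_def]; field_simp
  have le_N : ρ / 2 / r ≤ N := by
    have : (1 : ℝ) ≤ N := mod_cast hN
    rw [div_right_comm]
    linarith [Nat.lt_floor_add_one (ρ / r)]
  calc μ.real (closedBall x r)
      ≤ 8 / N * ∑ k ∈ Finset.range N, ‖charFun μ (k * t)‖ :=
        measureReal_closedBall_le_sum_norm_charFun (by omega) hN_le x
    _ ≤ 8 / N * (C * (N : ℝ) ^ (1 - s)) := by gcongr; exact hsum N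
    _ = 8 * C * (N : ℝ) ^ (-s) := by
        rw [sub_eq_add_neg, Real.rpow_add (by positivity), Real.rpow_one]
        field_simp
    _ ≤ 8 * C * (ρ / 2 / r) ^ (-s) := by
        gcongr ?_ * ?_
        exact Real.rpow_le_rpow_of_nonpos (by positivity) le_N (by linarith)
    _ = 8 * C * (ρ / 2) ^ (-s) * r ^ s := by
        rw [Real.div_rpow (by positivity) hr.le, Real.rpow_neg hr.le s, div_inv_eq_mul]
        ring

lemma abs_le_mul_of_abs_sub_div_lt_one {x R : ℝ} {n : ℕ} {m : ℤ} (hn : n ≠ 0) (hx : |x| ≤ R)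
    (h : |x - m / n| < 1) : |(m : ℝ)| ≤ (R + 1) * n := by
  have : |(m : ℝ) / n| ≤ R + 1 := by
    linarith [abs_sub_abs_le_abs_sub ((m : ℝ) / n) x, abs_sub_comm x (m / n)]
  rwa [abs_div, Nat.abs_cast, div_le_iff₀ (by positivity)] at this

lemma IsFrostman.exists_measure_near_rational_le {μ : Measure ℝ} {s q : ℝ} (hμ : IsFrostman μ s)
    (hq : 0 < q) (R : ℕ) :
    ∃ C : ℝ, ∀ n : ℕ, μ {x | |x| ≤ R ∧ ∃ m : ℤ, |x - m / n| < (n : ℝ) ^ (-q)} ≤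
      ENNReal.ofReal (C * (n : ℝ) ^ (1 - q * s)) := by
  obtain ⟨C, hC₀, hC⟩ := hμ
  refine ⟨(2 * R + 3) * C, fun n ↦ ?_⟩
  rcases eq_or_ne n 0 with rfl | hn
  -- `0 ^ (-q) = 0`, so the set is empty.
  · simp [Real.zero_rpow (neg_ne_zero.2 hq.ne'), (abs_nonneg _).not_gt]
  have hn₁ : (1 : ℝ) ≤ n := mod_cast Nat.one_le_iff_ne_zero.2 hn
  set K : ℕ := (R + 1) * n with hK
  have cover : {x : ℝ | |x| ≤ R ∧ ∃ m : ℤ, |x - m / n| < (n : ℝ) ^ (-q)} ⊆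
      ⋃ m ∈ Finset.Icc (-K : ℤ) K, closedBall ((m : ℝ) / n) ((n : ℝ) ^ (-q)) := by
    rintro x ⟨hx, m, hm⟩
    have hmK := abs_le_mul_of_abs_sub_div_lt_one hn hx
      (hm.trans_le (Real.rpow_le_one_of_one_le_of_nonpos hn₁ (by linarith)))
    refine mem_iUnion₂.2 ⟨m, ?_, hm.le⟩
    rw [Finset.mem_Icc, ← abs_le]
    exact_mod_cast hmK
  have card_eq : (Finset.Icc (-K : ℤ) K).card = 2 * K + 1 := by
    rw [Int.card_Icc]
    omega
  calc μ {x | |x| ≤ R ∧ ∃ m : ℤ, |x - m / n| < (n : ℝ) ^ (-q)}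
      ≤ ∑ m ∈ Finset.Icc (-K : ℤ) K, μ (closedBall ((m : ℝ) / n) ((n : ℝ) ^ (-q))) :=
        (measure_mono cover).trans (measure_biUnion_finset_le _ _)
    _ ≤ (2 * K + 1 : ℕ) * ENNReal.ofReal (C * ((n : ℝ) ^ (-q)) ^ s) := by
        rw [← card_eq, ← nsmul_eq_mul]
        exact Finset.sum_le_card_nsmul _ _ _ fun m _ ↦ hC _ _ (by positivity)
    _ = ENNReal.ofReal ((2 * K + 1 : ℕ) * (C * (n : ℝ) ^ (-(q * s)))) := by
        rw [← ENNReal.ofReal_natCast, ← ENNReal.ofReal_mul (by positivity),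
          ← Real.rpow_mul (by positivity), neg_mul]
    _ ≤ ENNReal.ofReal ((2 * R + 3) * n * (C * (n : ℝ) ^ (-(q * s)))) := by
        gcongr
        rw [hK]
        push_cast
        linarith
    _ = ENNReal.ofReal ((2 * R + 3) * C * (n : ℝ) ^ (1 - q * s)) := by
        rw [sub_eq_add_neg, Real.rpow_add (by positivity), Real.rpow_one]
        ring_nf

theorem IsFrostman.ae_not_liouvilleWith {μ : Measure ℝ} {s p : ℝ} (hμ : IsFrostman μ s)
    (hs : 0 < s) (hp : 2 < p * s) : ∀ᵐ x ∂μ, ¬LiouvilleWith p x := by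
  obtain ⟨q, hq, hqp⟩ := exists_between ((div_lt_iff₀ hs).2 hp)
  have hq₀ : 0 < q := (by positivity : 0 < 2 / s).trans hq
  have summable : Summable fun n : ℕ ↦ (n : ℝ) ^ (1 - q * s) :=
    Real.summable_nat_rpow.2 (by linarith [(div_lt_iff₀ hs).1 hq])
  have borelCantelli (R : ℕ) : ∀ᵐ x ∂μ, ∀ᶠ n : ℕ in atTop,
      x ∉ {x : ℝ | |x| ≤ R ∧ ∃ m : ℤ, |x - m / n| < (n : ℝ) ^ (-q)} := by
    obtain ⟨C, hC⟩ := hμ.exists_measure_near_rational_le hq₀ R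
    exact ae_eventually_notMem <|
      ne_top_of_le_ne_top (summable.mul_left C).tsum_ofReal_ne_top (ENNReal.tsum_le_tsum hC)
  filter_upwards [ae_all_iff.2 borelCantelli] with x hx hxp
  obtain ⟨R, hR⟩ := exists_nat_ge |x|
  obtain ⟨n, ⟨m, -, hm⟩, hn⟩ := ((hxp.frequently_lt_rpow_neg hqp).and_eventually (hx R)).exists
  exact hn ⟨hR, m, hm⟩

theorem IsFrostman.ae_not_liouville {μ : Measure ℝ} {s : ℝ} (hμ : IsFrostman μ s) (hs : 0 < s) :
    ∀ᵐ x ∂μ, ¬Liouville x := by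
  have hp : 2 < 3 / s * s := by
    rw [div_mul_cancel₀ _ hs.ne']
    norm_num
  exact (hμ.ae_not_liouvilleWith hs hp).mono fun x hx hxL ↦ hx (hxL.liouvilleWith _)

end Frostman

section FourierDecay

open Asymptotics

lemma fourierT_eq_charFun (μ : Measure ℝ) (ξ : ℝ) :
    fourierT μ ξ = charFun μ (-2 * Real.pi * ξ) := by
  simp only [fourierT, charFun_apply_real, Complex.ofReal_mul]

theorem ae_not_liouville_of_fourierT_isBigO_rpow_neg {μ : Measure ℝ} [IsFiniteMeasure μ] {a s : ℝ}
    (ha : a ≠ 0) (hs : 0 < s)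
    (h : (fun k : ℕ ↦ fourierT μ (a * k)) =O[atTop] fun k ↦ (k : ℝ) ^ (-s)) :
    ∀ᵐ x ∂μ, ¬Liouville x := by
  set σ := min s (1 / 2)
  have hσ : 0 < σ := by positivity
  have rpow_isBigO : (fun k : ℕ ↦ (k : ℝ) ^ (-s)) =O[atTop] fun k ↦ (k : ℝ) ^ (-σ) := by
    refine .of_norm_eventuallyLE ?_
    filter_upwards [eventually_ge_atTop 1] with k hk
    rw [Real.norm_of_nonneg (by positivity)]
    exact Real.rpow_le_rpow_of_exponent_le (mod_cast hk) (neg_le_neg (min_le_left _ _))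
  have charFun_isBigO : (fun k : ℕ ↦ charFun μ (k * (-2 * Real.pi * a))) =O[atTop]
      fun k ↦ (k : ℝ) ^ (-σ) := by
    simpa only [fourierT_eq_charFun, ← mul_assoc, mul_comm] using h.trans rpow_isBigO
  refine (isFrostman_of_charFun_isBigO ?_ hσ.le ?_ charFun_isBigO).ae_not_liouville hσ
  · simp [ha, Real.pi_ne_zero]
  · exact (min_le_right _ _).trans_lt (by norm_num)

lemma exists_isBigO_rpow_neg_of_liminf_pos {a : ℝ} (ha : 0 < a) {f τ : ℝ → ℝ}
    (hf_pos : ∀ ξ, 0 ≤ ξ → 0 < f ξ) (hτ : ∀ ξ, 1 < ξ → τ ξ = -Real.log (f ξ) / Real.log ξ)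
    (hliminf : 0 < liminf (fun k : ℕ => ((τ (a * k) : ℝ) : EReal)) atTop) :
    ∃ s > (0 : ℝ), (fun k : ℕ ↦ f (a * k)) =O[atTop] fun k ↦ (k : ℝ) ^ (-s) := by
  obtain ⟨s, hs, hs_lt⟩ := EReal.lt_iff_exists_real_btwn.1 hliminf
  have hak : ∀ᶠ k : ℕ in atTop, 1 < a * k :=
    (tendsto_natCast_atTop_atTop.const_mul_atTop ha).eventually_gt_atTop 1
  have f_le : ∀ᶠ k : ℕ in atTop, ‖f (a * k)‖ ≤ (a * k) ^ (-s) := by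
    filter_upwards [eventually_lt_of_lt_liminf hs_lt, hak] with k hk hak
    have hsτ : s * Real.log (a * k) < -Real.log (f (a * k)) := by
      rwa [EReal.coe_lt_coe_iff, hτ _ hak, lt_div_iff₀ (Real.log_pos hak)] at hk
    have ak_pos : 0 < a * k := by linarith
    rw [Real.norm_of_nonneg (hf_pos _ ak_pos.le).le]
    exact Real.le_rpow_of_log_le ak_pos (by linarith)
  refine ⟨s, EReal.coe_pos.1 hs, .of_bound (a ^ (-s)) (f_le.mono fun k hk ↦ hk.trans_eq ?_)⟩
  rw [Real.mul_rpow ha.le k.cast_nonneg, Real.norm_of_nonneg (by positivity)]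

lemma isBigO_natCast_mul_of_norm_le {E : Type*} [SeminormedAddCommGroup E] {g : ℝ → E} {f : ℝ → ℝ}
    {a C M : ℝ} (ha : 0 < a) (h : ∀ ξ, M ≤ |ξ| → ‖g ξ‖ ≤ C * f |ξ|) :
    (fun k : ℕ ↦ g (a * k)) =O[atTop] fun k : ℕ ↦ f (a * k) := by
  have tendsto_mul : Tendsto (fun k : ℕ ↦ a * k) atTop atTop :=
    tendsto_natCast_atTop_atTop.const_mul_atTop ha
  have norm_le : (fun k : ℕ ↦ ‖g (a * k)‖) ≤ᶠ[atTop] fun k ↦ C * f (a * k) := by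
    filter_upwards [tendsto_mul.eventually_ge_atTop M] with k hk
    have abs_eq : |a * k| = a * k := abs_of_nonneg (by positivity)
    simpa only [abs_eq] using h (a * k) (hk.trans_eq abs_eq.symm)
  exact (IsBigO.of_norm_eventuallyLE norm_le).trans (isBigO_const_mul_self C _ _)

theorem stmt16_general {μ : Measure ℝ} [IsFiniteMeasure μ] {a : ℝ} (ha : 0 < a) {f τ : ℝ → ℝ}
    (hf_pos : ∀ ξ, 0 ≤ ξ → 0 < f ξ) (hτ : ∀ ξ, 1 < ξ → τ ξ = -Real.log (f ξ) / Real.log ξ)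
    (hliminf : 0 < liminf (fun k : ℕ ↦ ((τ (a * k) : ℝ) : EReal)) atTop)
    (hμ : (fun k : ℕ ↦ fourierT μ (a * k)) =O[atTop] fun k : ℕ ↦ f (a * k)) :
    ∀ᵐ x ∂μ, ¬Liouville x := by
  obtain ⟨s, hs, hfs⟩ := exists_isBigO_rpow_neg_of_liminf_pos ha hf_pos hτ hliminf
  exact ae_not_liouville_of_fourierT_isBigO_rpow_neg ha.ne' hs (hμ.trans hfs)

end FourierDecay

theorem stmt16 (a : ℝ) (ha : 0 < a)
    (f : ℝ → ℝ) (hf_pos : ∀ ξ, 0 ≤ ξ → 0 < f ξ)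
    (τ : ℝ → ℝ)
    (hτ : ∀ ξ, 1 < ξ → τ ξ = -Real.log (f ξ) / Real.log ξ)
    (hliminf : 0 < liminf (fun k : ℕ => ((τ (a * k) : ℝ) : EReal)) atTop)
    (hτ_uc : UniformContinuousOn τ (Ioi 1)) :
    ¬ ∃ μ : Measure ℝ, IsProbabilityMeasure μ ∧ μ {x : ℝ | Liouville x}ᶜ = 0 ∧
      ∃ C > (0 : ℝ), ∃ M > (0 : ℝ),
        ∀ ξ : ℝ, M ≤ |ξ| → ‖fourierT μ ξ‖ ≤ C * f |ξ| := by
  rintro ⟨μ, _, hμ, C, -, M, -, h⟩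
  have ae_liouville : ∀ᵐ x ∂μ, Liouville x := mem_ae_iff.2 hμ
  have := stmt16_general ha hf_pos hτ hliminf (isBigO_natCast_mul_of_norm_le ha h)
  exact (ae_liouville.and this).exists.elim fun _ hx ↦ hx.2 hx.1
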